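/- Let h₀ be a Laurent polynomial on (ℂ*)^k whose Newton polytope Δ₀ is k-dimensional and which is non-degenerate in the sense of Kouchnirenko. Then there exists an open dense subset U ⊆ ℂ^k such that for every a ∈ U and every proper face Γ ⊊ Δ₀ of Δ₀ the system x_i ∂h₀^Γ/∂x_i(x) − a_i h₀^Γ(x) = 0 (1 ≤ i ≤ k) has no solution x ∈ (ℂ*)^k, where h₀^Γ denotes the sum of those terms of h₀ whose exponents lie in Γ. -/

import Mathlib

/-!
If `x` in the torus solves the system for the face cut out by `κ`, then `h₀^Γ(x) ≠ 0`, since otherwise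
all partial derivatives of `h₀^Γ` would vanish at `x` as well, against non-degeneracy. The face part
is quasi-homogeneous: `∑ κ_i x_i ∂_i h₀^Γ = d h₀^Γ` with `d = min_{Δ₀} ⟨κ, ·⟩` (`sum_mul_pd_fPart`).
Hence a solution forces `⟨κ, a⟩ = d`, so `a` lies on a complex affine hyperplane, which is proper
because `κ ≠ 0`. The system depends on `κ` only through the set of exponents lying on the face, and
there are finitely many such sets; choosing one `κ` for each, the complement of the finitely many
resulting hyperplanes is the required open dense set.
-/

open scoped BigOperators Classical

noncomputable section

/-- The Laurent monomial `x^m = ∏ i, x i ^ m i` on the torus. -/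
def mon {k : ℕ} (m : Fin k → ℤ) (x : Fin k → ℂ) : ℂ := ∏ i, x i ^ m i

/-- The `i`-th partial derivative of a function on `ℂ^k`. -/
def pd {k : ℕ} (i : Fin k) (f : (Fin k → ℂ) → ℂ) (x : Fin k → ℂ) : ℂ :=
  fderiv ℂ f x (Pi.single i 1)

/-- The Laurent polynomial with (finitely supported) coefficients `c`. -/
def lpoly {k : ℕ} (c : (Fin k → ℤ) →₀ ℂ) (x : Fin k → ℂ) : ℂ :=
  ∑ m ∈ c.support, c m * mon m x

/-- The Newton polytope of the Laurent polynomial with coefficients `c`. -/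
def NP {k : ℕ} (c : (Fin k → ℤ) →₀ ℂ) : Set (Fin k → ℝ) :=
  convexHull ℝ ((fun m => fun i => (m i : ℝ)) '' (c.support : Set (Fin k → ℤ)))

/-- The minimum of the linear functional `⟨κ, ·⟩` over a (compact) set `Δ`. -/
def pairMin {k : ℕ} (Δ : Set (Fin k → ℝ)) (κ : Fin k → ℝ) : ℝ :=
  sInf ((fun v => ∑ i, κ i * v i) '' Δ)

/-- The `Γ(κ)`-part of the Laurent polynomial: the sum of the terms supported on the
face `Γ(κ) = {b ∈ Δ₀ : ⟨κ,b⟩ = min_{Δ₀} ⟨κ,·⟩}` of the Newton polytope. For `κ ≠ 0`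
(and `Δ₀` of full dimension `k`) these faces are exactly the proper faces `Γ ⊊ Δ₀`. -/
def fPart {k : ℕ} (c : (Fin k → ℤ) →₀ ℂ) (κ : Fin k → ℝ) (x : Fin k → ℂ) : ℂ :=
  ∑ m ∈ c.support,
    if (∑ i, κ i * (m i : ℝ)) = pairMin (NP c) κ then c m * mon m x else 0

/-- Non-degeneracy in the sense of Kouchnirenko. -/
def KNonDeg {k : ℕ} (c : (Fin k → ℤ) →₀ ℂ) : Prop :=
  ∀ κ : Fin k → ℝ,
    ¬ ∃ x : Fin k → ℂ, (∀ i, x i ≠ 0) ∧ fPart c κ x = 0 ∧ ∀ i, pd i (fPart c κ) x = 0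

/-- The exponents of `c` lying on the face of the Newton polytope cut out by `κ`. -/
def faceSupp {k : ℕ} (c : (Fin k → ℤ) →₀ ℂ) (κ : Fin k → ℝ) : Finset (Fin k → ℤ) :=
  c.support.filter fun m => (∑ i, κ i * (m i : ℝ)) = pairMin (NP c) κ

lemma fPart_eq_sum_faceSupp {k : ℕ} (c : (Fin k → ℤ) →₀ ℂ) (κ : Fin k → ℝ) :
    fPart c κ = fun x => ∑ m ∈ faceSupp c κ, c m * mon m x := by
  funext x
  simp only [fPart, faceSupp, Finset.sum_filter]

lemma hasFDerivAt_mon {k : ℕ} (m : Fin k → ℤ) {x : Fin k → ℂ} (hx : ∀ i, x i ≠ 0) :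
    HasFDerivAt (mon m)
      (∑ j, (∏ l ∈ Finset.univ.erase j, x l ^ m l) •
        (((m j : ℂ) * x j ^ (m j - 1)) • ContinuousLinearMap.proj (R := ℂ) (φ := fun _ => ℂ) j))
      x := by
  unfold mon
  refine HasFDerivAt.finsetProd fun j _ => ?_
  exact (hasDerivAt_zpow (m j) (x j) (Or.inl (hx j))).comp_hasFDerivAt x
    (hasFDerivAt_apply (𝕜 := ℂ) j x)

lemma mul_pd_mon {k : ℕ} (m : Fin k → ℤ) {x : Fin k → ℂ} (hx : ∀ i, x i ≠ 0) (i : Fin k) :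
    x i * pd i (mon m) x = (m i : ℂ) * mon m x := by
  rw [pd, (hasFDerivAt_mon m hx).fderiv, sum_apply,
    Finset.sum_eq_single i]
  · have h : mon m x = x i ^ m i * ∏ l ∈ Finset.univ.erase i, x l ^ m l :=
      (Finset.mul_prod_erase _ _ (Finset.mem_univ i)).symm
    have hz : x i * x i ^ (m i - 1) = x i ^ m i := by
      rw [← zpow_one_add₀ (hx i)]
      congr 1
      ring
    rw [h, ← hz]
    simp only [smul_apply, ContinuousLinearMap.proj_apply, Pi.single_eq_same,
      smul_eq_mul]
    ring
  · intro j _ hj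
    simp [Pi.single_eq_of_ne hj]
  · simp

lemma mul_pd_fPart {k : ℕ} (c : (Fin k → ℤ) →₀ ℂ) (κ : Fin k → ℝ) {x : Fin k → ℂ}
    (hx : ∀ i, x i ≠ 0) (i : Fin k) :
    x i * pd i (fPart c κ) x = ∑ m ∈ faceSupp c κ, c m * ((m i : ℂ) * mon m x) := by
  have h : HasFDerivAt (fPart c κ) (∑ m ∈ faceSupp c κ, c m • fderiv ℂ (mon m) x) x := by
    rw [fPart_eq_sum_faceSupp]
    refine HasFDerivAt.fun_sum fun m _ => ?_
    exact (hasFDerivAt_mon m hx).differentiableAt.hasFDerivAt.const_mul (c m)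
  rw [pd, h.fderiv, sum_apply, Finset.mul_sum]
  refine Finset.sum_congr rfl fun m _ => ?_
  rw [← mul_pd_mon m hx i, pd, smul_apply, smul_eq_mul]
  ring

/-- Euler's identity for the face part, which is quasi-homogeneous of weight `pairMin (NP c) κ` with
respect to `κ`. -/
lemma sum_mul_pd_fPart {k : ℕ} (c : (Fin k → ℤ) →₀ ℂ) (κ : Fin k → ℝ) {x : Fin k → ℂ}
    (hx : ∀ i, x i ≠ 0) :
    ∑ i, (κ i : ℂ) * (x i * pd i (fPart c κ) x) = (pairMin (NP c) κ : ℂ) * fPart c κ x := by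
  simp only [mul_pd_fPart c κ hx]
  simp only [fPart_eq_sum_faceSupp, Finset.mul_sum]
  rw [Finset.sum_comm]
  refine Finset.sum_congr rfl fun m hm => ?_
  have hm' : (∑ i, (κ i : ℂ) * (m i : ℂ)) = (pairMin (NP c) κ : ℂ) := by
    exact_mod_cast congrArg (fun r : ℝ => (r : ℂ)) (Finset.mem_filter.1 hm).2
  rw [← hm', Finset.sum_mul]
  exact Finset.sum_congr rfl fun i _ => by ring

/-- If the system for the face cut out by `κ` has a solution in the torus, then `a` lies on the
hyperplane `⟨κ, a⟩ = min_{Δ₀} ⟨κ, ·⟩`. -/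
lemma sum_mul_eq_pairMin {k : ℕ} {c : (Fin k → ℤ) →₀ ℂ} (hnd : KNonDeg c) (κ : Fin k → ℝ)
    {a x : Fin k → ℂ} (hx : ∀ i, x i ≠ 0)
    (hs : ∀ i, x i * pd i (fPart c κ) x - a i * fPart c κ x = 0) :
    ∑ i, (κ i : ℂ) * a i = (pairMin (NP c) κ : ℂ) := by
  have hne : fPart c κ x ≠ 0 := fun h0 => hnd κ ⟨x, hx, h0, fun i => by
    simpa [h0, hx i] using hs i⟩
  apply mul_right_cancel₀ hne
  rw [← sum_mul_pd_fPart c κ hx, Finset.sum_mul]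
  refine Finset.sum_congr rfl fun i _ => ?_
  rw [sub_eq_zero.1 (hs i), mul_assoc]

lemma isOpen_dense_hyperplane_compl {k : ℕ} {κ : Fin k → ℝ} (hκ : κ ≠ 0) (d : ℂ) :
    IsOpen {a : Fin k → ℂ | ∑ i, (κ i : ℂ) * a i ≠ d} ∧
      Dense {a : Fin k → ℂ | ∑ i, (κ i : ℂ) * a i ≠ d} := by
  obtain ⟨j, hj⟩ := Function.ne_iff.1 hκ
  have hj' : (κ j : ℂ) ≠ 0 := by exact_mod_cast hj
  let φ : (Fin k → ℂ) →L[ℂ] ℂ :=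
    ∑ i, (κ i : ℂ) • ContinuousLinearMap.proj (R := ℂ) (φ := fun _ => ℂ) i
  have hφ : ∀ a, φ a = ∑ i, (κ i : ℂ) * a i := fun a => by
    simp [φ]
  have hsurj : Function.Surjective φ := fun z => ⟨Pi.single j (z / κ j), by
    rw [hφ, Finset.sum_eq_single j]
    · rw [Pi.single_eq_same, mul_div_cancel₀ _ hj']
    · intro i _ hi
      rw [Pi.single_eq_of_ne hi, mul_zero]
    · simp⟩
  have hset : {a : Fin k → ℂ | ∑ i, (κ i : ℂ) * a i ≠ d} = φ ⁻¹' {d}ᶜ := by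
    ext a
    simp [hφ]
  rw [hset]
  exact ⟨isOpen_compl_singleton.preimage φ.continuous,
    (dense_compl_singleton d).preimage (φ.isOpenMap hsurj)⟩

/-- for a Kouchnirenko-nondegenerate Laurent polynomial `h₀` with
`k`-dimensional Newton polytope `Δ₀`, there is an open dense set of `a ∈ ℂ^k` such that
for every proper face `Γ ⊊ Δ₀` (cut out by some `κ ≠ 0`) the system
`x_i ∂h₀^Γ/∂x_i(x) − a_i h₀^Γ(x) = 0 (1 ≤ i ≤ k)` has no solution `x ∈ (ℂ*)^k`. -/
theorem stmt6 {k : ℕ} (c : (Fin k → ℤ) →₀ ℂ)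
    (hdim : (interior (NP c)).Nonempty)
    (hnd : KNonDeg c) :
    ∃ U : Set (Fin k → ℂ), IsOpen U ∧ Dense U ∧ ∀ a ∈ U,
      ∀ κ : Fin k → ℝ, κ ≠ 0 →
        ¬ ∃ x : Fin k → ℂ, (∀ i, x i ≠ 0) ∧
            ∀ i, x i * pd i (fPart c κ) x - a i * fPart c κ x = 0 := by
  -- Each exponent set of a face cut out by some nonzero `κ` comes from a member of the finite set `T`.
  obtain ⟨T, hT0, hT⟩ : ∃ T : Finset (Fin k → ℝ), (∀ κ ∈ T, κ ≠ 0) ∧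
      ∀ κ : Fin k → ℝ, κ ≠ 0 → ∃ κ' ∈ T, faceSupp c κ' = faceSupp c κ := by
    have hfin : (faceSupp c '' {κ | κ ≠ 0}).Finite := by
      refine (c.support.powerset.finite_toSet).subset ?_
      rintro _ ⟨κ, -, rfl⟩
      exact Finset.mem_coe.2 (Finset.mem_powerset.2 (Finset.filter_subset _ _))
    obtain ⟨T, hTs, hTi⟩ := Finset.subset_set_image_iff.1 hfin.coe_toFinset.subset
    refine ⟨T, fun κ hκ => hTs hκ, fun κ hκ => ?_⟩
    have : faceSupp c κ ∈ T.image (faceSupp c) := by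
      rw [hTi, hfin.mem_toFinset]
      exact ⟨κ, hκ, rfl⟩
    exact Finset.mem_image.1 this
  have hU := fun κ (hκ : κ ∈ T) =>
    isOpen_dense_hyperplane_compl (hT0 κ hκ) (pairMin (NP c) κ : ℂ)
  refine ⟨⋂ κ ∈ T, {a | ∑ i, (κ i : ℂ) * a i ≠ (pairMin (NP c) κ : ℂ)},
    isOpen_biInter_finset fun κ hκ => (hU κ hκ).1,
    dense_biInter_of_isOpen (fun κ hκ => (hU κ hκ).1) T.countable_toSet fun κ hκ => (hU κ hκ).2,
    ?_⟩
  rintro a ha κ hκ ⟨x, hx, hs⟩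
  obtain ⟨κ', hκ', he⟩ := hT κ hκ
  have hf : fPart c κ' = fPart c κ := by
    rw [fPart_eq_sum_faceSupp, fPart_eq_sum_faceSupp, he]
  rw [← hf] at hs
  exact Set.mem_iInter₂.1 ha κ' hκ' (sum_mul_eq_pairMin hnd κ' hx hs)
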